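/- Let ω = (ω_n, …, ω_1, ω_0) be a general basis of the polynomials of degree ≤ n over a field F, let F(x) and G(x) have degrees n and m with n > m, leading coefficient a_n of F, and assume the roots α_1, …, α_n ∈ F̄ of F are pairwise distinct. Then for every 0 ≤ k ≤ m, the k-th subresultant polynomial satisfies S_k = (−1)^{(n−k)(n−k−1)/2} · a_n^{m−n} · det([B_{ω,k}; X_{ω,k}]), where [B_{ω,k}; X_{ω,k}] is the n×n matrix over F[x] obtained by stacking the (n−k)×n matrix B_{ω,k} (the Bézout matrix B_ω of F and G in ω with its last k rows deleted) on top of X_{ω,k}. -/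

import Mathlib

open Polynomial Matrix BigOperators

noncomputable section

/-- A *general basis* of the polynomials of degree ≤ `n` over `K`:
`ω i` is monic of degree `i` for every `i ≤ n`. -/
def IsGeneralBasis {K : Type*} [Field K] (n : ℕ) (ω : ℕ → Polynomial K) : Prop :=
  ∀ i ≤ n, (ω i).Monic ∧ (ω i).natDegree = i

/-- `B` is the Bézout matrix of `P` and `Q` in the basis `ω`:
`P(x)Q(y) − P(y)Q(x) = (x − y) · ω̄(x)ᵀ B ω̄(y)` in `K[x,y] = (K[y])[x]`,
where the outer variable is `x` and the inner one is `y`, and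
`ω̄ = (ω_{n−1}, …, ω_1, ω_0)ᵀ`. -/
def BezoutRelation {K : Type*} [Field K] (n : ℕ) (ω : ℕ → Polynomial K)
    (P Q : Polynomial K) (B : Matrix (Fin n) (Fin n) K) : Prop :=
  P.map Polynomial.C * Polynomial.C Q - Polynomial.C P * Q.map Polynomial.C =
    (Polynomial.X - Polynomial.C Polynomial.X) *
      ∑ i : Fin n, ∑ j : Fin n,
        (ω (n - 1 - (i : ℕ))).map Polynomial.C * Polynomial.C (ω (n - 1 - (j : ℕ))) *
          Polynomial.C (Polynomial.C (B i j))

/-- The `(n−k) × n` submatrix of an `n × n` matrix obtained by deleting the last `k` rows. -/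
def topRows {K : Type*} (n k : ℕ) (B : Matrix (Fin n) (Fin n) K) :
    Matrix (Fin (n - k)) (Fin n) K :=
  Matrix.of fun i j => B ⟨(i : ℕ), by have := i.isLt; omega⟩ j

/-- The `k × n` matrix `X_{ω,k}`: rows `1,…,k` carry `−I_k` in (1-based) columns
`n−k, …, n−1`, and the last column of row `i` is `ω_{k+1−i}`. -/
def Xmat {K : Type*} [Field K] (n k : ℕ) (ω : ℕ → Polynomial K) :
    Matrix (Fin k) (Fin n) (Polynomial K) :=
  Matrix.of fun i j =>
    if (j : ℕ) = n - k - 1 + (i : ℕ) then -1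
    else if (j : ℕ) = n - 1 then ω (k - (i : ℕ))
    else 0

/-- Stacking an `(n−k) × n` scalar matrix on top of a `k × n` polynomial matrix. -/
def stackMat {K : Type*} [Field K] {n k : ℕ}
    (M : Matrix (Fin (n - k)) (Fin n) K) (Y : Matrix (Fin k) (Fin n) (Polynomial K)) :
    Matrix (Fin n) (Fin n) (Polynomial K) :=
  Matrix.of fun i j =>
    if h : (i : ℕ) < n - k then Polynomial.C (M ⟨(i : ℕ), h⟩ j)
    else Y ⟨(i : ℕ) - (n - k), by have := i.isLt; omega⟩ j

/-- The Vandermonde-type matrix with `(i,j)` entry `α_j^{n−i}` (1-based `i`). -/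
def vmat {L : Type*} [Field L] (n : ℕ) (α : Fin n → L) : Matrix (Fin n) (Fin n) L :=
  Matrix.of fun i j => α j ^ (n - 1 - (i : ℕ))

/-- The `(n+1) × (n+1)` matrix whose determinant is the numerator `D` in the
root expression of the `k`-th subresultant polynomial (power basis):
rows `1,…,n−k` have entries `α_j^{n−k−i} G(α_j)` (last column `0`),
rows `n−k+1,…,n+1` have entries `α_j^{k+1−i}` (last column `x^{k+1−i}`). -/
def subresNum {K L : Type*} [Field K] [Field L] [Algebra K L] (n k : ℕ)
    (α : Fin n → L) (G : Polynomial K) :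
    Matrix (Fin (n + 1)) (Fin (n + 1)) (Polynomial L) :=
  Matrix.of fun i j =>
    if hj : (j : ℕ) < n then
      if (i : ℕ) < n - k then
        Polynomial.C (α ⟨(j : ℕ), hj⟩ ^ (n - k - 1 - (i : ℕ)) *
          Polynomial.aeval (α ⟨(j : ℕ), hj⟩) G)
      else Polynomial.C (α ⟨(j : ℕ), hj⟩ ^ (n - (i : ℕ)))
    else
      if (i : ℕ) < n - k then 0 else Polynomial.X ^ (n - (i : ℕ))

/-- The `k`-th subresultant polynomial of `P` and `G` in terms of the roots `α` of `P`:
`S_k = (−1)^k a^{m−k} · D / V`. -/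
def subresPoly {K L : Type*} [Field K] [Field L] [Algebra K L] (n m k : ℕ)
    (a : K) (α : Fin n → L) (G : Polynomial K) : Polynomial L :=
  Polynomial.C ((-1) ^ k * algebraMap K L a ^ (m - k) / (vmat n α).det) *
    (subresNum n k α G).det

/-- The determinant of a square matrix vanishing above the antidiagonal, with constant
antidiagonal `c`. -/
lemma det_of_antitriangular {R : Type*} [CommRing R] (c : R) (p : ℕ)
    (T : Matrix (Fin p) (Fin p) R)
    (hzero : ∀ i j : Fin p, (i : ℕ) + j + 1 < p → T i j = 0)
    (hanti : ∀ i j : Fin p, (i : ℕ) + j + 1 = p → T i j = c) :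
    T.det = (-1) ^ (p * (p - 1) / 2) * c ^ p := by
  induction p with
  | zero => simp
  | succ p ih =>
    rw [det_succ_row_zero, Finset.sum_eq_single (Fin.last p)]
    · rw [ih, hanti 0 (Fin.last p) (by simp), Fin.val_last, ← Finset.sum_range_id_mul_two,
        ← Finset.sum_range_id_mul_two, Nat.mul_div_cancel _ two_pos,
        Nat.mul_div_cancel _ two_pos, Finset.sum_range_succ, pow_add, pow_succ c]
      · ring
      · intro i j hij
        apply hzero
        simp
        omega
      · intro i j hij
        apply hanti
        simp
        omega
    · intro j _ hj
      rw [hzero 0 j, mul_zero, zero_mul]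
      have : (j : ℕ) ≠ p := fun h => hj (Fin.ext h)
      have := j.isLt
      simp
      omega
    · simp

lemma vmat_det_ne_zero {L : Type*} [Field L] {n : ℕ} {α : Fin n → L}
    (hα : Function.Injective α) : (vmat n α).det ≠ 0 := by
  have h : (vmat n α).submatrix Fin.revPerm id = (vandermonde α)ᵀ := by
    ext i j
    simp only [vmat, submatrix_apply, of_apply, transpose_apply, vandermonde_apply, id,
      Fin.revPerm_apply, Fin.val_rev]
    congr 1
    omega
  intro h0
  apply det_vandermonde_ne_zero_iff.mpr hα
  rw [← det_transpose, ← h, det_permute, h0, mul_zero]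

/-- Horner expansion of the coefficients of a quotient by `X - C z`. -/
lemma coeff_of_eq_X_sub_C_mul {R : Type*} [CommRing R] {z : R} {H Z : R[X]}
    (h : H = (X - C z) * Z) (d N : ℕ) :
    Z.coeff d = ∑ l ∈ Finset.range N, H.coeff (d + 1 + l) * z ^ l + z ^ N * Z.coeff (d + N) := by
  induction N with
  | zero => simp
  | succ N ih =>
    have hc : H.coeff (d + 1 + N) = Z.coeff (d + N) - z * Z.coeff (d + N + 1) := by
      rw [h, sub_mul, coeff_sub, coeff_C_mul, show d + 1 + N = d + N + 1 by omega, coeff_X_mul]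
    rw [ih, Finset.sum_range_succ, hc, ← add_assoc d N 1]
    ring

/-- The coefficient matrix of `ω_{n-1}, …, ω_0` in the descending power basis. -/
def coeffMat {L : Type*} [Field L] (n : ℕ) (ω : ℕ → L[X]) : Matrix (Fin n) (Fin n) L :=
  of fun i s => (ω (n - 1 - i)).coeff (n - 1 - s)

lemma coeffMat_det {L : Type*} [Field L] {n : ℕ} {ω : ℕ → L[X]} (hω : IsGeneralBasis n ω) :
    (coeffMat n ω).det = 1 := by
  rw [det_of_isUpperTriangular]
  · apply Finset.prod_eq_one
    intro i _
    obtain ⟨hm, hd⟩ := hω (n - 1 - i) (by omega)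
    have := hm.coeff_natDegree
    rwa [hd] at this
  · intro i j hij
    have hij' : (j : ℕ) < i := hij
    apply coeff_eq_zero_of_natDegree_lt
    rw [(hω (n - 1 - i) (by omega)).2]
    omega

/-- The generalized Vandermonde matrix `(ω_{n-i}(α_j))`. -/
def basisEvalMat {L : Type*} [Field L] (n : ℕ) (ω : ℕ → L[X]) (α : Fin n → L) :
    Matrix (Fin n) (Fin n) L :=
  of fun i j => (ω (n - 1 - i)).eval (α j)

lemma basisEvalMat_det {L : Type*} [Field L] {n : ℕ} {ω : ℕ → L[X]} (hω : IsGeneralBasis n ω)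
    (α : Fin n → L) : (basisEvalMat n ω α).det = (vmat n α).det := by
  have h : basisEvalMat n ω α = coeffMat n ω * vmat n α := by
    ext i j
    have hi := i.isLt
    simp only [basisEvalMat, coeffMat, vmat, mul_apply, of_apply]
    rw [eval_eq_sum_range' (n := n) (by rw [(hω _ (by omega)).2]; omega),
      ← Finset.sum_range_reflect, Finset.sum_range]
  rw [h, det_mul, coeffMat_det hω, one_mul]

/-- The matrix obtained from `subresNum` by clearing its last row. -/
def subresReduced {L : Type*} [Field L] (p k : ℕ) (α : Fin (p + k) → L) (Q : L[X]) :
    Matrix (Fin (p + k)) (Fin (p + k)) L[X] :=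
  of fun i j =>
    if (i : ℕ) < p then C (α j ^ (p - 1 - (i : ℕ)) * Q.eval (α j))
    else C (α j ^ (p + k - (i : ℕ))) - X ^ (p + k - (i : ℕ))

lemma subresNum_det {K L : Type*} [Field K] [Field L] [Algebra K L] (p k : ℕ)
    (α : Fin (p + k) → L) (G : K[X]) :
    (subresNum (p + k) k α G).det =
      (subresReduced p k α (G.map (algebraMap K L))).det := by
  rw [← det_submatrix_equiv_self (finSumFinEquiv (m := p + k) (n := 1))]
  set A := (subresNum (p + k) k α G).submatrix (finSumFinEquiv (m := p + k) (n := 1))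
    (finSumFinEquiv (m := p + k) (n := 1)) with hA
  have hone : A.toBlocks₂₂ = 1 := by
    ext1 i j
    fin_cases i; fin_cases j
    simp [hA, toBlocks₂₂, subresNum]
  rw [← fromBlocks_toBlocks A, hone, det_fromBlocks_one₂₂]
  congr 1
  ext1 i j
  simp only [Matrix.sub_apply, mul_apply, Fin.sum_univ_one, hA, toBlocks₁₁, toBlocks₁₂, toBlocks₂₁,
    of_apply, submatrix_apply, subresNum, subresReduced, eval_map_algebraMap,
    finSumFinEquiv_apply_left, finSumFinEquiv_apply_right, Fin.val_castAdd, Fin.val_natAdd,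
    Nat.add_sub_cancel, Fin.isLt, dite_true, Nat.not_lt.mpr (Nat.le_add_right _ _), dite_false]
  split_ifs <;> simp_all

/-- The change of basis on the leading `p` rows, extended by the identity. -/
def leadingCoeffMat {L : Type*} [Field L] (p k : ℕ) (ω : ℕ → L[X]) :
    Matrix (Fin (p + k)) (Fin (p + k)) L[X] :=
  of fun i s => if (i : ℕ) < p then C ((ω (p + k - 1 - s)).coeff (p + k - 1 - i))
    else if i = s then 1 else 0

lemma leadingCoeffMat_det {L : Type*} [Field L] {p k : ℕ} {ω : ℕ → L[X]}
    (hω : IsGeneralBasis (p + k) ω) : (leadingCoeffMat p k ω).det = 1 := by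
  rw [det_of_isLowerTriangular]
  · apply Finset.prod_eq_one
    intro i _
    obtain ⟨hm, hd⟩ := hω (p + k - 1 - i) (by omega)
    have := hm.coeff_natDegree
    rw [hd] at this
    simp [leadingCoeffMat, this]
  · intro i j hij
    have hij' : (i : ℕ) < j := hij
    simp only [leadingCoeffMat, of_apply]
    split_ifs with h1 h2
    · rw [coeff_eq_zero_of_natDegree_lt, C_0]
      rw [(hω _ (by omega)).2]
      omega
    · simp [h2] at hij'
    · rfl

/-- The block-diagonal matrix expressing the reduced Bézout matrix through `subresReduced`. -/
def hornerMat {L : Type*} [Field L] (p k : ℕ) (ω : ℕ → L[X]) (P : L[X]) :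
    Matrix (Fin (p + k)) (Fin (p + k)) L[X] :=
  (fromBlocks (of fun i j : Fin p => C (P.coeff (p + k - i + (p - 1 - j)))) 0 0
    (of fun i j : Fin k => -C ((ω (k - i)).coeff (k - j)))).submatrix
      finSumFinEquiv.symm finSumFinEquiv.symm

lemma hornerMat_det {L : Type*} [Field L] {p k : ℕ} {ω : ℕ → L[X]} {P : L[X]}
    (hω : IsGeneralBasis (p + k) ω) (hP : P.natDegree = p + k) :
    (hornerMat p k ω P).det =
      C ((-1) ^ (p * (p - 1) / 2) * P.coeff (p + k) ^ p * (-1) ^ k) := by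
  rw [hornerMat, det_submatrix_equiv_self, det_fromBlocks_zero₂₁,
    det_of_antitriangular (C (P.coeff (p + k))), det_of_isUpperTriangular]
  · have : ∀ i : Fin k, (of fun i j : Fin k => -C ((ω (k - i)).coeff (k - j))) i i
        = (-1 : L[X]) := by
      intro i
      obtain ⟨hm, hd⟩ := hω (k - i) (by omega)
      have := hm.coeff_natDegree
      rw [hd] at this
      simp [this]
    simp [this]
  · intro i j hij
    have hij' : (j : ℕ) < i := hij
    simp only [of_apply]
    rw [coeff_eq_zero_of_natDegree_lt, C_0, neg_zero]
    rw [(hω _ (by omega)).2]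
    omega
  · intro i j hij
    simp only [of_apply]
    rw [coeff_eq_zero_of_natDegree_lt, C_0]
    omega
  · intro i j hij
    simp only [of_apply]
    congr 2
    omega

/-- The product of the stacked Bézout matrix with the generalized Vandermonde matrix. -/
def stackEval {L : Type*} [Field L] (p k : ℕ) (ω : ℕ → L[X]) (α : Fin (p + k) → L)
    (B : Matrix (Fin (p + k)) (Fin (p + k)) L) : Matrix (Fin (p + k)) (Fin (p + k)) L[X] :=
  of fun i j => if (i : ℕ) < p then C ((B * basisEvalMat (p + k) ω α) i j)
    else ω (p + k - i) - C ((ω (p + k - i)).eval (α j))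

lemma stackMat_mul_basisEvalMat {L : Type*} [Field L] {p k : ℕ} (hp : 0 < p) {ω : ℕ → L[X]}
    (hω : IsGeneralBasis (p + k) ω) (α : Fin (p + k) → L)
    (B : Matrix (Fin (p + k)) (Fin (p + k)) L) :
    stackMat (topRows (p + k) k B) (Xmat (p + k) k ω) * (basisEvalMat (p + k) ω α).map C =
      stackEval p k ω α B := by
  ext1 i j
  have hi := i.isLt
  simp only [mul_apply, stackMat, topRows, Xmat, stackEval, of_apply, map_apply,
    Nat.add_sub_cancel]
  by_cases h : (i : ℕ) < p
  · simp [h]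
  · simp only [h, dite_false, if_false]
    have h0 : ω 0 = 1 := (hω 0 (by omega)).1.natDegree_eq_zero.mp (hω 0 (by omega)).2
    rw [Finset.sum_eq_add_of_mem (⟨i - 1, by omega⟩ : Fin (p + k))
      (⟨p + k - 1, by omega⟩ : Fin (p + k)) (Finset.mem_univ _) (Finset.mem_univ _)]
    · have e1 : (i : ℕ) - 1 = p - 1 + (i - p) := by omega
      have e2 : p + k - 1 ≠ p - 1 + (i - p) := by omega
      have e3 : p + k - 1 - (i - 1) = p + k - i := by omega
      have e4 : k - (i - p) = p + k - i := by omega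
      simp only [if_pos e1, if_neg e2, if_true, basisEvalMat, of_apply, e3, e4, Nat.sub_self, h0,
        eval_one, C_1]
      ring
    · simp only [ne_eq, Fin.mk.injEq]
      omega
    · rintro c - ⟨hc1, hc2⟩
      have hc1' : (c : ℕ) ≠ p - 1 + (i - p) := fun h' => hc1 (Fin.ext (by simp; omega))
      have hc2' : (c : ℕ) ≠ p + k - 1 := fun h' => hc2 (Fin.ext h')
      simp [hc1', hc2']

lemma leadingCoeffMat_mul_stackEval {L : Type*} [Field L] {p k : ℕ} {ω : ℕ → L[X]}
    (hω : IsGeneralBasis (p + k) ω) {P Q : L[X]} (α : Fin (p + k) → L)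
    (B : Matrix (Fin (p + k)) (Fin (p + k)) L)
    (hB : ∀ j, C (Q.eval (α j)) * P = (X - C (α j)) *
      ∑ i : Fin (p + k), ω (p + k - 1 - i) * C ((B * basisEvalMat (p + k) ω α) i j)) :
    leadingCoeffMat p k ω * stackEval p k ω α B =
      hornerMat p k ω P * subresReduced p k α Q := by
  ext1 i j
  refine Fin.addCases (fun i => ?_) (fun i => ?_) i
  · have hi := i.isLt
    set Z := ∑ i : Fin (p + k), ω (p + k - 1 - i) * C ((B * basisEvalMat (p + k) ω α) i j) with hZ
    have hcoeff : ∀ d, Z.coeff d = ∑ s : Fin (p + k),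
        (ω (p + k - 1 - s)).coeff d * (B * basisEvalMat (p + k) ω α) s j := by
      intro d
      simp [hZ]
    have hleft : (leadingCoeffMat p k ω * stackEval p k ω α B) (Fin.castAdd k i) j =
        C (Z.coeff (p + k - 1 - i)) := by
      rw [hcoeff, map_sum, mul_apply]
      refine Finset.sum_congr rfl fun s _ => ?_
      simp only [leadingCoeffMat, stackEval, of_apply, Fin.val_castAdd, hi, if_true]
      split_ifs with hs
      · rw [C_mul]
      · rw [coeff_eq_zero_of_natDegree_lt (by rw [(hω _ (by omega)).2]; omega)]
        simp
    have hZ0 : Z.coeff (p + k - 1 - i + p) = 0 := by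
      rw [hcoeff]
      refine Finset.sum_eq_zero fun s _ => ?_
      rw [coeff_eq_zero_of_natDegree_lt (by rw [(hω _ (by omega)).2]; omega), zero_mul]
    rw [hleft, coeff_of_eq_X_sub_C_mul (hB j) _ p, hZ0, mul_zero, add_zero, mul_apply,
      Fin.sum_univ_add]
    simp only [hornerMat, submatrix_apply, finSumFinEquiv_symm_apply_castAdd,
      finSumFinEquiv_symm_apply_natAdd, fromBlocks_apply₁₁, fromBlocks_apply₁₂, Matrix.zero_apply,
      zero_mul, Finset.sum_const_zero, add_zero, of_apply, subresReduced, Fin.val_castAdd,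
      Fin.isLt, if_true]
    rw [← Finset.sum_range_reflect, Finset.sum_range, map_sum]
    refine Finset.sum_congr rfl fun s _ => ?_
    rw [coeff_C_mul, ← C_mul, show p + k - 1 - (i : ℕ) + 1 = p + k - i by omega]
    congr 1
    ring
  · have hi := i.isLt
    have hdeg : (ω (k - i)).natDegree < k + 1 := by
      rw [(hω _ (by omega)).2]
      omega
    have e1 : p + k - (p + (i : ℕ)) = k - i := by omega
    have hleft : (leadingCoeffMat p k ω * stackEval p k ω α B) (Fin.natAdd p i) j =
        ω (k - i) - C ((ω (k - i)).eval (α j)) := by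
      rw [mul_apply, Finset.sum_eq_single (Fin.natAdd p i)]
      · simp [leadingCoeffMat, stackEval, e1]
      · intro s _ hs
        simp [leadingCoeffMat, hs.symm]
      · simp
    rw [hleft, mul_apply, Fin.sum_univ_add]
    simp only [hornerMat, submatrix_apply, finSumFinEquiv_symm_apply_castAdd,
      finSumFinEquiv_symm_apply_natAdd, fromBlocks_apply₂₁, fromBlocks_apply₂₂, Matrix.zero_apply,
      zero_mul, Finset.sum_const_zero, zero_add, of_apply, subresReduced, Fin.val_natAdd,
      Nat.not_lt.mpr (Nat.le_add_right _ _), if_false]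
    have hsum : ω (k - i) - C ((ω (k - i)).eval (α j)) = ∑ l ∈ Finset.range k,
        -C ((ω (k - i)).coeff (l + 1)) * (C (α j ^ (l + 1)) - X ^ (l + 1)) := by
      conv_lhs => rw [eval_eq_sum_range' hdeg, map_sum]
      conv_lhs =>
        enter [1]
        rw [as_sum_range_C_mul_X_pow' _ hdeg]
      rw [← Finset.sum_sub_distrib, Finset.sum_range_succ']
      simp only [pow_zero, mul_one, sub_self, add_zero]
      refine Finset.sum_congr rfl fun l _ => ?_
      rw [C_mul]
      ring
    rw [hsum, ← Finset.sum_range_reflect, Finset.sum_range]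
    refine Finset.sum_congr rfl fun s _ => ?_
    have hs := s.isLt
    rw [show k - 1 - (s : ℕ) + 1 = k - s by omega, show p + k - (p + (s : ℕ)) = k - s by omega]

/-- The numerator determinant of the subresultant against the stacked Bézout determinant. -/
lemma stackMat_det_mul_vmat_det {L : Type*} [Field L] {p k : ℕ} (hp : 0 < p) {ω : ℕ → L[X]}
    (hω : IsGeneralBasis (p + k) ω) {P Q : L[X]} (hP : P.natDegree = p + k)
    (α : Fin (p + k) → L) (B : Matrix (Fin (p + k)) (Fin (p + k)) L)
    (hB : ∀ j, C (Q.eval (α j)) * P = (X - C (α j)) *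
      ∑ i : Fin (p + k), ω (p + k - 1 - i) * C ((B * basisEvalMat (p + k) ω α) i j)) :
    (stackMat (topRows (p + k) k B) (Xmat (p + k) k ω)).det * C (vmat (p + k) α).det =
      C ((-1) ^ (p * (p - 1) / 2) * P.coeff (p + k) ^ p * (-1) ^ k) *
        (subresReduced p k α Q).det := by
  rw [← hornerMat_det hω hP, ← det_mul, ← leadingCoeffMat_mul_stackEval hω α B hB, det_mul,
    leadingCoeffMat_det hω, one_mul, ← stackMat_mul_basisEvalMat hp hω, det_mul,
    ← basisEvalMat_det hω, RingHom.map_det, RingHom.mapMatrix_apply]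

lemma IsGeneralBasis.map {K L : Type*} [Field K] [Field L] {n : ℕ} {ω : ℕ → K[X]}
    (hω : IsGeneralBasis n ω) (φ : K →+* L) : IsGeneralBasis n fun i => (ω i).map φ :=
  fun i hi => ⟨(hω i hi).1.map φ, by rw [natDegree_map, (hω i hi).2]⟩

lemma stackMat_map {K L : Type*} [Field K] [Field L] (φ : K →+* L) (n k : ℕ) (ω : ℕ → K[X])
    (B : Matrix (Fin n) (Fin n) K) :
    (stackMat (topRows n k B) (Xmat n k ω)).map (Polynomial.map φ) =
      stackMat (topRows n k (B.map φ)) (Xmat n k fun i => (ω i).map φ) := by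
  ext1 i j
  simp only [stackMat, topRows, Xmat, map_apply, of_apply]
  split_ifs <;> simp

lemma BezoutRelation.eval_root {K L : Type*} [Field K] [Field L] [Algebra K L] {n : ℕ}
    {ω : ℕ → K[X]} {P Q : K[X]} {B : Matrix (Fin n) (Fin n) K} (hB : BezoutRelation n ω P Q B)
    (α : Fin n → L) (j : Fin n) (hα : aeval (α j) P = 0) :
    C ((Q.map (algebraMap K L)).eval (α j)) * P.map (algebraMap K L) = (X - C (α j)) *
      ∑ i : Fin n, (ω (n - 1 - i)).map (algebraMap K L) *
        C ((B.map (algebraMap K L) *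
          basisEvalMat n (fun i => (ω i).map (algebraMap K L)) α) i j) := by
  have hcomp : (aeval (α j) : K[X] →ₐ[K] L).toRingHom.comp C = algebraMap K L := by
    ext x
    simp
  have h := congrArg (Polynomial.map (aeval (α j) : K[X] →ₐ[K] L).toRingHom) hB
  simp only [Polynomial.map_sub, Polynomial.map_mul, Polynomial.map_map, map_C, map_X,
    Polynomial.map_sum, hcomp] at h
  simp only [AlgHom.toRingHom_eq_coe, RingHom.coe_coe, hα, C_0, zero_mul, sub_zero, aeval_X,
    aeval_C] at h
  rw [eval_map_algebraMap, mul_comm, h]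
  congr 1
  refine Finset.sum_congr rfl fun i _ => ?_
  simp only [mul_apply, map_apply, basisEvalMat, of_apply, eval_map_algebraMap, map_sum,
    Finset.mul_sum, C_mul]
  refine Finset.sum_congr rfl fun l _ => ?_
  ring

/-- for a general basis `ω`, squarefree `F` of degree `n` and `G` of
degree `m < n`, and `0 ≤ k ≤ m`,
`S_k = (−1)^{(n−k)(n−k−1)/2} aₙ^{m−n} · det [B_{ω,k}; X_{ω,k}]` in `F̄[x]`. -/
theorem subresultant_as_single_determinant
    {K : Type*} [Field K] (n m k : ℕ) (hmn : m < n) (hkm : k ≤ m)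
    (ω : ℕ → Polynomial K) (hω : IsGeneralBasis n ω)
    (a b : ℕ → K) (P Q : Polynomial K)
    (hP : P = ∑ i ∈ Finset.range (n + 1), Polynomial.C (a i) * ω i)
    (hQ : Q = ∑ i ∈ Finset.range (m + 1), Polynomial.C (b i) * ω i)
    (han : a n ≠ 0) (hbm : b m ≠ 0)
    (hdegP : P.natDegree = n) (hdegQ : Q.natDegree = m)
    (α : Fin n → AlgebraicClosure K)
    (hfact : P.map (algebraMap K (AlgebraicClosure K)) =
      Polynomial.C (algebraMap K (AlgebraicClosure K) (a n)) *
        ∏ j : Fin n, (Polynomial.X - Polynomial.C (α j)))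
    (hdist : Function.Injective α)
    (B : Matrix (Fin n) (Fin n) K) (hB : BezoutRelation n ω P Q B) :
    subresPoly n m k (a n) α Q =
      Polynomial.C ((-1 : AlgebraicClosure K) ^ ((n - k) * (n - k - 1) / 2) *
          algebraMap K (AlgebraicClosure K) (a n) ^ ((m : ℤ) - (n : ℤ))) *
        ((stackMat (topRows n k B) (Xmat n k ω)).det).map
          (algebraMap K (AlgebraicClosure K)) := by
  obtain ⟨p, rfl⟩ : ∃ p, n = p + k := ⟨n - k, by omega⟩
  set φ := algebraMap K (AlgebraicClosure K) with hφ
  have hroot : ∀ j, aeval (α j) P = 0 := by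
    intro j
    rw [← eval_map_algebraMap, ← hφ, hfact, eval_mul, eval_prod,
      Finset.prod_eq_zero (Finset.mem_univ j) (by simp), mul_zero]
  have hlead : (P.map φ).coeff (p + k) = φ (a (p + k)) := by
    have hmonic : (∏ j : Fin (p + k), (X - C (α j))).Monic :=
      monic_prod_of_monic _ _ fun j _ => monic_X_sub_C _
    have hdeg : (∏ j : Fin (p + k), (X - C (α j))).natDegree = p + k := by
      rw [natDegree_prod_of_monic _ _ fun j _ => monic_X_sub_C (α j)]
      simp
    have h1 := hmonic.coeff_natDegree
    rw [hdeg] at h1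
    rw [hfact, coeff_C_mul, h1, mul_one]
  have hV := vmat_det_ne_zero hdist
  have hA : φ (a (p + k)) ≠ 0 := (map_ne_zero φ).mpr han
  have key := stackMat_det_mul_vmat_det (P := P.map φ) (Q := Q.map φ) (by omega) (hω.map φ)
    (by rw [natDegree_map, hdegP]) α (B.map φ) fun j => hB.eval_root α j (hroot j)
  rw [hlead, ← stackMat_map, ← coe_mapRingHom, ← RingHom.mapMatrix_apply, ← RingHom.map_det,
    coe_mapRingHom] at key
  rw [subresPoly, subresNum_det, Nat.add_sub_cancel, ← hφ]
  apply mul_right_cancel₀ (C_ne_zero.mpr hV)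
  rw [mul_assoc (C _) (Polynomial.map φ _), key, mul_right_comm, ← C_mul, ← mul_assoc,
    ← C_mul]
  congr 2
  rw [div_mul_cancel₀ _ hV]
  have hpow : φ (a (p + k)) ^ (m - k) =
      φ (a (p + k)) ^ ((m : ℤ) - ((p + k : ℕ) : ℤ)) * φ (a (p + k)) ^ p := by
    rw [← zpow_natCast, ← zpow_natCast, ← zpow_add₀ hA]
    congr 1
    push_cast [Nat.cast_sub hkm]
    ring
  have hsign : ((-1 : AlgebraicClosure K) ^ (p * (p - 1) / 2)) ^ 2 = 1 := by
    rw [← pow_mul, mul_comm, pow_mul]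
    simp
  rw [hpow]
  linear_combination (-(-1) ^ k * φ (a (p + k)) ^ ((m : ℤ) - ((p + k : ℕ) : ℤ)) *
    φ (a (p + k)) ^ p) * hsign
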